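/- (Regret bound for the within-task algorithm.) Assume ‖x_k‖ ≤ R and ℓ(·, y_k) is L-Lipschitz for all k. Then the iterates (w^{(k)})_{k=1}^n of Algorithm 1 satisfy, for every w ∈ ℝ^d, (1/n) Σ_{k=1}^n [ ℓ(⟨x_k, w^{(k)}⟩, y_k) + (λ/2)‖w^{(k)} − h‖² ] − R_{Z_n,h}(w) ≤ (1/n) Σ_{k=1}^n [ ℓ(⟨x_k, w^{(k)}⟩, y_k) + (λ/2)‖w^{(k)} − h‖² ] − min_{w'} R_{Z_n,h}(w') ≤ 2 R² L² (log n + 1)/(λ n). -/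

import Mathlib

open MeasureTheory Real
open scoped InnerProductSpace

noncomputable section

abbrev Vec (d : ℕ) := EuclideanSpace ℝ (Fin d)
abbrev Pt (d : ℕ) := Vec d × ℝ

/-- Empirical risk of `w` on the dataset `S`. -/
def empRisk {d n : ℕ} (ℓ : ℝ → ℝ → ℝ) (S : Fin n → Pt d) (w : Vec d) : ℝ :=
  (n : ℝ)⁻¹ * ∑ k, ℓ (⟪(S k).1, w⟫_ℝ) ((S k).2)

/-- Biased regularized empirical risk. -/
def regRisk {d n : ℕ} (ℓ : ℝ → ℝ → ℝ) (lam : ℝ) (S : Fin n → Pt d)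
    (h w : Vec d) : ℝ :=
  empRisk ℓ S w + lam / 2 * ‖w - h‖ ^ 2

/-- True risk of `w` under the task distribution `μ`. -/
def trueRisk {d : ℕ} (ℓ : ℝ → ℝ → ℝ) (μ : Measure (Pt d)) (w : Vec d) : ℝ :=
  ∫ z, ℓ (⟪z.1, w⟫_ℝ) (z.2) ∂μ

/-- `u` is a subgradient of `f : ℝ → ℝ` at `a`. -/
def IsSubgradAt (f : ℝ → ℝ) (u a : ℝ) : Prop :=
  ∀ b, f a + u * (b - a) ≤ f b

/-- Subgradients of an `L`-Lipschitz function are bounded by `L`. -/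
lemma IsSubgradAt.abs_le {f : ℝ → ℝ} {u a L : ℝ} (hu : IsSubgradAt f u a)
    (hf : ∀ a b, |f a - f b| ≤ L * |a - b|) : |u| ≤ L := by
  have h₁ := hu (a + 1)
  have h₂ := hu (a - 1)
  have h₃ := (le_abs_self _).trans (hf (a + 1) a)
  have h₄ := (le_abs_self _).trans (hf (a - 1) a)
  rw [show a + 1 - a = 1 by ring] at h₁ h₃
  rw [show a - 1 - a = -1 by ring] at h₂ h₄
  rw [abs_one] at h₃
  rw [abs_neg, abs_one] at h₄
  exact _root_.abs_le.2 ⟨by linarith, by linarith⟩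

section SubgradientStep

variable {E : Type*} [NormedAddCommGroup E] [InnerProductSpace ℝ E]

/-- A step of size `1 / ((k + 1) λ)` along `g + λ v` replaces `v` by a convex combination of `v`
and `-g / λ`, so it preserves the ball of radius `C / λ`. -/
lemma norm_step_le {v g : E} {lam C : ℝ} (hlam : 0 < lam) (k : ℕ)
    (hg : ‖g‖ ≤ C) (hv : ‖v‖ ≤ C / lam) :
    ‖v - (((k + 1 : ℕ) : ℝ) * lam)⁻¹ • (g + lam • v)‖ ≤ C / lam := by
  have hk : (0 : ℝ) < (k : ℝ) + 1 := by positivity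
  have hcomb : v - (((k + 1 : ℕ) : ℝ) * lam)⁻¹ • (g + lam • v)
      = ((k : ℝ) / (k + 1)) • v - (((k : ℝ) + 1) * lam)⁻¹ • g := by
    have hcoef : (k : ℝ) / (k + 1) = 1 - (((k : ℝ) + 1) * lam)⁻¹ * lam := by
      field_simp
      ring
    rw [hcoef]
    push_cast
    module
  rw [hcomb]
  calc _ ≤ ‖((k : ℝ) / (k + 1)) • v‖ + ‖(((k : ℝ) + 1) * lam)⁻¹ • g‖ := norm_sub_le _ _
    _ = (k : ℝ) / (k + 1) * ‖v‖ + (((k : ℝ) + 1) * lam)⁻¹ * ‖g‖ := by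
      rw [norm_smul, norm_smul, Real.norm_of_nonneg (by positivity),
        Real.norm_of_nonneg (by positivity)]
    _ ≤ (k : ℝ) / (k + 1) * (C / lam) + (((k : ℝ) + 1) * lam)⁻¹ * C := by gcongr
    _ = C / lam := by
      field_simp

/-- One-step regret of the subgradient method on the `λ`-strongly convex function
`p ↦ φ p + λ / 2 * ‖p - h‖ ^ 2`, where `g` is a subgradient of `φ` at `p` and `a`, `b` are
the values of `φ` at `p` and at the comparator `w`. -/
lemma regret_step_le {p p' g h w : E} {lam C a b : ℝ} (hlam : 0 < lam) (k : ℕ)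
    (hg : ‖g‖ ≤ C) (hp : ‖p - h‖ ≤ C / lam) (hab : a + ⟪g, w - p⟫_ℝ ≤ b)
    (hp' : p' = p - (((k + 1 : ℕ) : ℝ) * lam)⁻¹ • (g + lam • (p - h))) :
    (a + lam / 2 * ‖p - h‖ ^ 2) - (b + lam / 2 * ‖w - h‖ ^ 2)
      ≤ lam / 2 * ((k : ℝ) * ‖p - w‖ ^ 2 - ((k : ℝ) + 1) * ‖p' - w‖ ^ 2)
        + 2 * C ^ 2 / lam * ((k : ℝ) + 1)⁻¹ := by
  have hk : (0 : ℝ) < (k : ℝ) + 1 := by positivity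
  set G := g + lam • (p - h) with hG
  have hGn : ‖G‖ ≤ 2 * C := by
    calc ‖G‖ ≤ ‖g‖ + ‖lam • (p - h)‖ := norm_add_le _ _
      _ = ‖g‖ + lam * ‖p - h‖ := by rw [norm_smul, Real.norm_of_nonneg hlam.le]
      _ ≤ C + lam * (C / lam) := by gcongr
      _ = 2 * C := by field_simp; ring
  have hGsq : ‖G‖ ^ 2 ≤ 4 * C ^ 2 := by
    calc ‖G‖ ^ 2 ≤ (2 * C) ^ 2 := by gcongr
      _ = 4 * C ^ 2 := by ring
  have hdist : ‖p' - w‖ ^ 2 = ‖p - w‖ ^ 2 - 2 * (((k : ℝ) + 1) * lam)⁻¹ * ⟪G, p - w⟫_ℝ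
      + (((k : ℝ) + 1) * lam)⁻¹ ^ 2 * ‖G‖ ^ 2 := by
    have hsplit : p' - w = (p - w) - (((k : ℝ) + 1) * lam)⁻¹ • G := by
      rw [hp']
      push_cast
      abel
    rw [hsplit, norm_sub_sq_real, real_inner_smul_right, norm_smul, mul_pow, Real.norm_eq_abs,
      sq_abs, real_inner_comm]
    ring
  have hinner : ⟪G, p - w⟫_ℝ = lam / 2 * ((k : ℝ) + 1) * (‖p - w‖ ^ 2 - ‖p' - w‖ ^ 2)
      + ‖G‖ ^ 2 * (2 * lam * ((k : ℝ) + 1))⁻¹ := by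
    rw [hdist]
    field_simp
    ring
  have hquad : ‖w - h‖ ^ 2 = ‖p - h‖ ^ 2 - 2 * ⟪p - h, p - w⟫_ℝ + ‖p - w‖ ^ 2 := by
    rw [← norm_sub_sq_real]
    congr 2
    abel
  have hGinner : ⟪G, p - w⟫_ℝ = -⟪g, w - p⟫_ℝ + lam * ⟪p - h, p - w⟫_ℝ := by
    rw [hG, inner_add_left, real_inner_smul_left, ← inner_neg_right, neg_sub]
  have hGbound : ‖G‖ ^ 2 * (2 * lam * ((k : ℝ) + 1))⁻¹ ≤ 2 * C ^ 2 / lam * ((k : ℝ) + 1)⁻¹ := by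
    calc _ ≤ 4 * C ^ 2 * (2 * lam * ((k : ℝ) + 1))⁻¹ := by gcongr
      _ = _ := by
        field_simp
        ring
  rw [hquad]
  linarith

end SubgradientStep

lemma sum_range_inv_succ_le_log_add_one (n : ℕ) :
    ∑ i ∈ Finset.range n, ((i : ℝ) + 1)⁻¹ ≤ Real.log n + 1 := by
  have := harmonic_le_one_add_log n
  simp only [harmonic] at this
  push_cast at this
  linarith

/-- Regret bound for the within-task algorithm: for every `w`,
`(1/n) Σ_k ℓ_{k,h}(w^{(k)}) - R_{Z_n,h}(w)
  ≤ (1/n) Σ_k ℓ_{k,h}(w^{(k)}) - min R_{Z_n,h} ≤ 2R²L²(log n + 1)/(λn)`. -/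
theorem stmt12
    (d n : ℕ) (hd : 1 ≤ d) (hn : 1 ≤ n)
    (R L lam : ℝ) (hR : 0 ≤ R) (hL : 0 ≤ L) (hlam : 0 < lam)
    (Y : Set ℝ) (ℓ : ℝ → ℝ → ℝ)
    (hℓ0 : ∀ a y, y ∈ Y → 0 ≤ ℓ a y)
    (hℓconv : ∀ y ∈ Y, ConvexOn ℝ Set.univ fun a => ℓ a y)
    (hℓlip : ∀ y ∈ Y, ∀ a b, |ℓ a y - ℓ b y| ≤ L * |a - b|)
    (S : Fin n → Pt d) (hSY : ∀ k, (S k).2 ∈ Y)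
    (hSR : ∀ k, ‖(S k).1‖ ≤ R)
    (h : Vec d)
    -- Algorithm 1: SGD on the biased regularized risk
    (W : ℕ → Vec d) (u' : Fin n → ℝ)
    (hW1 : W 1 = h)
    (hsub : ∀ k : Fin n,
      IsSubgradAt (fun a => ℓ a (S k).2) (u' k) (⟪(S k).1, W (k.1 + 1)⟫_ℝ))
    (hrec : ∀ k : Fin n, W (k.1 + 2)
      = W (k.1 + 1) - (((k.1 + 1 : ℕ) : ℝ) * lam)⁻¹ •
          (u' k • (S k).1 + lam • (W (k.1 + 1) - h))) :
    ∀ w : Vec d,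
      ((n : ℝ)⁻¹ * ∑ k : Fin n, (ℓ (⟪(S k).1, W (k.1 + 1)⟫_ℝ) ((S k).2)
            + lam / 2 * ‖W (k.1 + 1) - h‖ ^ 2)
          - regRisk ℓ lam S h w
        ≤ (n : ℝ)⁻¹ * ∑ k : Fin n, (ℓ (⟪(S k).1, W (k.1 + 1)⟫_ℝ) ((S k).2)
            + lam / 2 * ‖W (k.1 + 1) - h‖ ^ 2)
          - ⨅ w' : Vec d, regRisk ℓ lam S h w')
      ∧ ((n : ℝ)⁻¹ * ∑ k : Fin n, (ℓ (⟪(S k).1, W (k.1 + 1)⟫_ℝ) ((S k).2)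
            + lam / 2 * ‖W (k.1 + 1) - h‖ ^ 2)
          - (⨅ w' : Vec d, regRisk ℓ lam S h w')
        ≤ 2 * R ^ 2 * L ^ 2 * (Real.log n + 1) / (lam * n)) := by
  have hn0 : (0 : ℝ) < n := by exact_mod_cast hn
  have hgrad : ∀ k, ‖u' k • (S k).1‖ ≤ R * L := fun k => by
    rw [norm_smul, Real.norm_eq_abs, mul_comm R]
    exact mul_le_mul ((hsub k).abs_le (hℓlip _ (hSY k))) (hSR k) (norm_nonneg _) hL
  have hball : ∀ k ≤ n, ‖W (k + 1) - h‖ ≤ R * L / lam := by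
    intro k
    induction k with
    | zero =>
      intro _
      simp only [zero_add, hW1, sub_self, norm_zero]
      positivity
    | succ k ih =>
      intro hk
      have hstep := norm_step_le hlam k (hgrad ⟨k, hk⟩) (ih (by omega))
      rwa [sub_right_comm, ← hrec ⟨k, hk⟩] at hstep
  have hregret : ∀ w, (n : ℝ)⁻¹ * ∑ k : Fin n, (ℓ (⟪(S k).1, W (k.1 + 1)⟫_ℝ) ((S k).2)
      + lam / 2 * ‖W (k.1 + 1) - h‖ ^ 2) - regRisk ℓ lam S h w
        ≤ 2 * R ^ 2 * L ^ 2 * (Real.log n + 1) / (lam * n) := by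
    intro w
    have hsum : ∑ k : Fin n, ((ℓ (⟪(S k).1, W (k.1 + 1)⟫_ℝ) ((S k).2)
          + lam / 2 * ‖W (k.1 + 1) - h‖ ^ 2)
          - (ℓ (⟪(S k).1, w⟫_ℝ) ((S k).2) + lam / 2 * ‖w - h‖ ^ 2))
        ≤ ∑ k ∈ Finset.range n,
          (lam / 2 * ((k : ℝ) * ‖W (k + 1) - w‖ ^ 2 - ((k : ℝ) + 1) * ‖W (k + 2) - w‖ ^ 2)
            + 2 * (R * L) ^ 2 / lam * ((k : ℝ) + 1)⁻¹) := by
      rw [← Fin.sum_univ_eq_sum_range (fun k : ℕ =>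
        lam / 2 * ((k : ℝ) * ‖W (k + 1) - w‖ ^ 2 - ((k : ℝ) + 1) * ‖W (k + 2) - w‖ ^ 2)
          + 2 * (R * L) ^ 2 / lam * ((k : ℝ) + 1)⁻¹)]
      refine Finset.sum_le_sum fun k _ =>
        regret_step_le hlam k (hgrad k) (hball k k.2.le) ?_ (hrec k)
      rw [real_inner_smul_left, inner_sub_right]
      exact hsub k _
    have htel : ∑ k ∈ Finset.range n,
        ((k : ℝ) * ‖W (k + 1) - w‖ ^ 2 - ((k : ℝ) + 1) * ‖W (k + 2) - w‖ ^ 2)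
          = -((n : ℝ) * ‖W (n + 1) - w‖ ^ 2) := by
      have := Finset.sum_range_sub' (fun k : ℕ => (k : ℝ) * ‖W (k + 1) - w‖ ^ 2) n
      simpa using this
    have htel_nonpos : lam / 2 * -((n : ℝ) * ‖W (n + 1) - w‖ ^ 2) ≤ 0 :=
      mul_nonpos_of_nonneg_of_nonpos (by positivity) (neg_nonpos.2 (by positivity))
    rw [Finset.sum_add_distrib, ← Finset.mul_sum, ← Finset.mul_sum, htel] at hsum
    have hharm : 2 * (R * L) ^ 2 / lam * ∑ k ∈ Finset.range n, ((k : ℝ) + 1)⁻¹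
        ≤ 2 * (R * L) ^ 2 / lam * (Real.log n + 1) :=
      mul_le_mul_of_nonneg_left (sum_range_inv_succ_le_log_add_one n) (by positivity)
    have hrisk : regRisk ℓ lam S h w
        = (n : ℝ)⁻¹ * ∑ k : Fin n, (ℓ (⟪(S k).1, w⟫_ℝ) ((S k).2) + lam / 2 * ‖w - h‖ ^ 2) := by
      rw [regRisk, empRisk, Finset.sum_add_distrib, mul_add, Finset.sum_const, Finset.card_univ,
        Fintype.card_fin, nsmul_eq_mul, inv_mul_cancel_left₀ hn0.ne']
    rw [hrisk, ← mul_sub, ← Finset.sum_sub_distrib]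
    calc _ ≤ (n : ℝ)⁻¹ * (2 * (R * L) ^ 2 / lam * (Real.log n + 1)) := by
          gcongr
          linarith
      _ = _ := by
          field_simp
  have hbdd : BddBelow (Set.range fun w' : Vec d => regRisk ℓ lam S h w') := by
    refine ⟨0, ?_⟩
    rintro _ ⟨w', rfl⟩
    have := Finset.sum_nonneg fun k (_ : k ∈ Finset.univ) => hℓ0 (⟪(S k).1, w'⟫_ℝ) _ (hSY k)
    simp only [regRisk, empRisk]
    positivity
  intro w
  refine ⟨sub_le_sub_left (ciInf_le hbdd w) _, ?_⟩
  rw [sub_le_comm]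
  exact le_ciInf fun w' => sub_le_comm.1 (hregret w')
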